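/- arXiv:1301.2361 — 5 statements merged into one kernel-verified Lean document; each statement's English description precedes it below -/
import Mathlib

section
/- Let m be a nonzero integer and let s, t be real numbers with s > 0, t > 1, and s + 2 < t + 1/t < s + 2 + 4/(s·g_{m-1}(s)²). Then the trace of W = (XY⁻¹)^m (X⁻¹Y)^m equals s·(s + 2 - t - 1/t)·g_{m-1}(s)² + 2, and this trace lies strictly between -2 and 2; consequently W (which has determinant 1) has two distinct complex eigenvalues. -/
/-- `fN m` is the polynomial `f_m` (for `m ≥ 0`), viewed as a function of a real variable. -/
noncomputable def fN : ℕ → ℝ → ℝ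
  | 0 => fun _ => 1
  | 1 => fun s => s + 1
  | n + 2 => fun s => (s + 2) * fN (n + 1) s - fN n s

/-- `gN m` is the polynomial `g_m` (for `m ≥ 0`), viewed as a function of a real variable. -/
noncomputable def gN : ℕ → ℝ → ℝ
  | 0 => fun _ => 1
  | 1 => fun s => s + 2
  | n + 2 => fun s => (s + 2) * gN (n + 1) s - gN n s

/-- The two-sided family `f_m`, `m ∈ ℤ`, with `f_{-m} = f_{m-1}` for `m ≥ 1`. -/
noncomputable def fZ : ℤ → ℝ → ℝ
  | Int.ofNat n => fN n
  | Int.negSucc n => fN n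

/-- The two-sided family `g_m`, `m ∈ ℤ`, with `g_{-1} = 0` and `g_{-m} = -g_{m-2}` for `m ≥ 2`. -/
noncomputable def gZ : ℤ → ℝ → ℝ
  | Int.ofNat n => gN n
  | Int.negSucc 0 => fun _ => 0
  | Int.negSucc (n + 1) => fun s => -(gN n s)

open Matrix

/-- The matrix `X = [[√t, 1/√t], [0, 1/√t]]`. -/
noncomputable def Xmat (t : ℝ) : Matrix (Fin 2) (Fin 2) ℝ :=
  !![Real.sqrt t, 1 / Real.sqrt t; 0, 1 / Real.sqrt t]

/-- The matrix `Y = [[√t, 0], [-s√t, 1/√t]]`. -/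
noncomputable def Ymat (s t : ℝ) : Matrix (Fin 2) (Fin 2) ℝ :=
  !![Real.sqrt t, 0; -s * Real.sqrt t, 1 / Real.sqrt t]

/-
Both `A = XY⁻¹` and `B = X⁻¹Y` have determinant `1` and trace `s + 2`. By Cayley-Hamilton the powers
of such a matrix satisfy the recursion of the Chebyshev polynomials `S`, and
`g_m(s) = S_m(s + 2)`, so `A ^ m = g_{m-1} A - g_{m-2}`, and likewise for `B`. Expanding the product
and using `g_{m-1}² + g_{m-2}² - (s + 2) g_{m-1} g_{m-2} = 1` leaves
`tr (A ^ m B ^ m) = g_{m-1}² (tr (A B) - 2) + 2`. Since `S_n` is positive on `[2, ∞)` for `n ≥ 0`,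
`g_{m-1}(s)` is nonzero, and the bounds on `t + 1/t` place this trace strictly between `-2` and `2`,
where the discriminant `tr² - 4` of the characteristic polynomial is negative.
-/

open Polynomial.Chebyshev (S)

section ChebyshevPowers

variable {R : Type*} [CommRing R] {A B : Matrix (Fin 2) (Fin 2) R}

theorem add_inv_eq_trace_smul_one (hA : A.det = 1) : A + A⁻¹ = A.trace • 1 := by
  rw [Matrix.inv_def, hA, Ring.inverse_one, one_smul, adjugate_fin_two, Matrix.trace_fin_two]
  ext i j
  fin_cases i <;> fin_cases j <;> simp [add_comm]

theorem zpow_add_one_add_zpow_sub_one (hA : A.det = 1) (m : ℤ) :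
    A ^ (m + 1) + A ^ (m - 1) = A.trace • A ^ m := by
  have hunit : IsUnit A.det := hA ▸ isUnit_one
  rw [Matrix.zpow_add_one hunit, Matrix.zpow_sub_one hunit, ← mul_add,
    add_inv_eq_trace_smul_one hA, mul_smul_comm, mul_one]

theorem eval_chebyshevS_add_one_add_sub_one (x : R) (m : ℤ) :
    (S R (m + 1)).eval x + (S R (m - 1)).eval x = x * (S R m).eval x := by
  simp [Polynomial.Chebyshev.S_add_one]

theorem zpow_eq_chebyshevS_smul_sub (hA : A.det = 1) (m : ℤ) :
    A ^ m = (S R (m - 1)).eval A.trace • A - (S R (m - 2)).eval A.trace • 1 := by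
  let F (k : ℤ) : Matrix (Fin 2) (Fin 2) R :=
    (S R (k - 1)).eval A.trace • A - (S R (k - 2)).eval A.trace • 1
  have hF (k : ℤ) : F (k + 1) + F (k - 1) = A.trace • F k := by
    have hS₁ := eval_chebyshevS_add_one_add_sub_one A.trace (k - 1)
    have hS₂ := eval_chebyshevS_add_one_add_sub_one A.trace (k - 2)
    simp only [F, smul_sub, smul_smul, ← hS₁, ← hS₂, sub_add_eq_add_sub, sub_right_comm k _ 1]
    module
  change A ^ m = F m
  induction m using Polynomial.Chebyshev.induct with
  | zero => simp [F]
  | one => simp [F]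
  | add_two n ih₁ ih₀ =>
    have hpow := zpow_add_one_add_zpow_sub_one hA (n + 1)
    have hFn := hF (n + 1)
    rw [add_sub_cancel_right, add_assoc, one_add_one_eq_two] at hpow hFn
    rw [eq_sub_of_add_eq hpow, eq_sub_of_add_eq hFn, ih₀, ih₁]
  | neg_add_one n ih₀ ih₁ =>
    rw [eq_sub_of_add_eq' (zpow_add_one_add_zpow_sub_one hA (-n)), eq_sub_of_add_eq' (hF (-n)),
      ih₀, ih₁]

theorem chebyshevS_sq_add_sq (x : R) (m : ℤ) :
    (S R (m - 1)).eval x ^ 2 + (S R (m - 2)).eval x ^ 2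
      - x * (S R (m - 1)).eval x * (S R (m - 2)).eval x = 1 := by
  have h := congrArg (Polynomial.eval x) (Polynomial.Chebyshev.S_sq_add_S_sq R (m - 2))
  rw [show m - 2 + 1 = m - 1 by ring] at h
  simp only [Polynomial.eval_sub, Polynomial.eval_add, Polynomial.eval_mul, Polynomial.eval_pow,
    Polynomial.eval_X, Polynomial.eval_one] at h
  linear_combination h

theorem eval_chebyshevS_pos_and_le_add_one [LinearOrder R] [IsStrictOrderedRing R] {x : R}
    (hx : 2 ≤ x) (n : ℕ) :
    0 < (S R n).eval x ∧ (S R n).eval x ≤ (S R (n + 1)).eval x := by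
  induction n with
  | zero => simpa using one_le_two.trans hx
  | succ n ih =>
    obtain ⟨hpos, hle⟩ := ih
    have hrec := eval_chebyshevS_add_one_add_sub_one x (n + 1)
    rw [add_sub_cancel_right] at hrec
    push_cast
    have hpos_succ := hpos.trans_le hle
    have hdouble := mul_le_mul_of_nonneg_right hx hpos_succ.le
    exact ⟨hpos_succ, by linarith⟩

theorem trace_zpow_mul_zpow (hA : A.det = 1) (hB : B.det = 1) (htr : A.trace = B.trace) (m : ℤ) :
    (A ^ m * B ^ m).trace = (S R (m - 1)).eval A.trace ^ 2 * ((A * B).trace - 2) + 2 := by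
  have hS := chebyshevS_sq_add_sq A.trace m
  rw [zpow_eq_chebyshevS_smul_sub hA, zpow_eq_chebyshevS_smul_sub hB, ← htr]
  simp only [sub_mul, mul_sub, smul_mul_assoc, mul_smul_comm, one_mul, mul_one, Matrix.trace_sub,
    Matrix.trace_smul, Matrix.trace_one, Fintype.card_fin, smul_eq_mul, ← htr]
  push_cast
  linear_combination 2 * hS

theorem det_zpow_eq_one (hA : A.det = 1) (m : ℤ) : (A ^ m).det = 1 := by
  cases m <;> simp [hA]

end ChebyshevPowers

theorem exists_ne_isRoot_charpoly_of_discr_ne_zero {K : Type*} [Field K] [IsAlgClosed K]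
    {M : Matrix (Fin 2) (Fin 2) K} (hM : M.discr ≠ 0) :
    ∃ a b : K, a ≠ b ∧ M.charpoly.IsRoot a ∧ M.charpoly.IsRoot b := by
  have hcard : M.charpoly.roots.card = 2 := by
    rw [IsAlgClosed.card_roots_eq_natDegree, M.charpoly_natDegree_eq_dim, Fintype.card_fin]
  obtain ⟨a, b, hroots⟩ := Multiset.card_eq_two.1 hcard
  have htrace : M.trace = a + b := by simp [Matrix.trace_eq_sum_roots_charpoly, hroots]
  have hdet : M.det = a * b := by simp [Matrix.det_eq_prod_roots_charpoly, hroots]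
  have hdiscr : M.discr = (a - b) ^ 2 := by
    rw [Matrix.discr_fin_two, htrace, hdet]
    ring
  refine ⟨a, b, fun hab => hM (by simp [hdiscr, hab]), ?_, ?_⟩ <;>
    exact Polynomial.isRoot_of_mem_roots (by simp [hroots])

theorem discr_map_fin_two {R R' : Type*} [CommRing R] [CommRing R'] [Nontrivial R']
    (f : R →+* R') (M : Matrix (Fin 2) (Fin 2) R) : (M.map f).discr = f M.discr := by
  have := f.domain_nontrivial
  simp only [Matrix.discr_fin_two, Matrix.trace_fin_two, Matrix.det_fin_two, Matrix.map_apply,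
    map_sub, map_pow, map_add, map_mul, map_ofNat]

theorem discr_neg_of_det_eq_one {R : Type*} [CommRing R] [LinearOrder R] [IsStrictOrderedRing R]
    {M : Matrix (Fin 2) (Fin 2) R} (hdet : M.det = 1)
    (hlower : -2 < M.trace) (hupper : M.trace < 2) : M.discr < 0 := by
  rw [Matrix.discr_fin_two, hdet]
  nlinarith

theorem gN_eq_eval_chebyshevS (s : ℝ) : ∀ n : ℕ, gN n s = (S ℝ n).eval (s + 2)
  | 0 => by simp [gN]
  | 1 => by simp [gN]
  | n + 2 => by simp [gN, gN_eq_eval_chebyshevS s n, gN_eq_eval_chebyshevS s (n + 1)]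

theorem gZ_eq_eval_chebyshevS (m : ℤ) (s : ℝ) : gZ m s = (S ℝ m).eval (s + 2) := by
  match m with
  | Int.ofNat n => exact gN_eq_eval_chebyshevS s n
  | Int.negSucc 0 => simp [gZ]
  | Int.negSucc (n + 1) =>
    have hindex : Int.negSucc (n + 1) = -(n : ℤ) - 2 := by omega
    rw [hindex, Polynomial.Chebyshev.S_neg_sub_two, Polynomial.eval_neg, ← gN_eq_eval_chebyshevS,
      ← hindex, gZ]

theorem gZ_ne_zero {m : ℤ} {s : ℝ} (hm : m ≠ -1) (hs : 0 ≤ s) : gZ m s ≠ 0 := by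
  have hgN (n : ℕ) : gN n s ≠ 0 := by
    rw [gN_eq_eval_chebyshevS]
    exact (eval_chebyshevS_pos_and_le_add_one (le_add_of_nonneg_left hs) n).1.ne'
  match m with
  | Int.ofNat n => exact hgN n
  | Int.negSucc 0 => exact absurd rfl hm
  | Int.negSucc (n + 1) => exact neg_ne_zero.2 (hgN n)

section MatrixW

/-- The matrix `W = (XY⁻¹)^m (X⁻¹Y)^m`. -/
noncomputable def Wmat (m : ℤ) (s t : ℝ) : Matrix (Fin 2) (Fin 2) ℝ :=
  (Xmat t * (Ymat s t)⁻¹) ^ m * ((Xmat t)⁻¹ * Ymat s t) ^ m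

variable {s t : ℝ}

theorem det_Xmat (ht : 0 < t) : (Xmat t).det = 1 := by
  simp [Xmat, (Real.sqrt_pos.2 ht).ne']

theorem det_Ymat (ht : 0 < t) : (Ymat s t).det = 1 := by
  simp [Ymat, (Real.sqrt_pos.2 ht).ne']

theorem Xmat_mul_inv_Ymat (ht : 0 < t) : Xmat t * (Ymat s t)⁻¹ = !![s + 1, 1; s, 1] := by
  have hsqrt : √t ≠ 0 := (Real.sqrt_pos.2 ht).ne'
  rw [Matrix.inv_def, det_Ymat ht, Ring.inverse_one, one_smul, Ymat, adjugate_fin_two_of, Xmat,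
    Matrix.mul_fin_two]
  ext i j
  fin_cases i <;> fin_cases j <;> simp [mul_left_comm _ s, hsqrt, add_comm]

theorem inv_Xmat_mul_Ymat (ht : 0 < t) :
    (Xmat t)⁻¹ * Ymat s t = !![s + 1, -(1 / t); -(s * t), 1] := by
  have hsqrt : √t ≠ 0 := (Real.sqrt_pos.2 ht).ne'
  have hsq : √t * √t = t := Real.mul_self_sqrt ht.le
  rw [Matrix.inv_def, det_Xmat ht, Ring.inverse_one, one_smul, Xmat, adjugate_fin_two_of, Ymat,
    Matrix.mul_fin_two]
  ext i j
  fin_cases i <;> fin_cases j <;>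
    simp [mul_left_comm _ s, ← mul_inv, hsqrt, hsq, add_comm]

theorem det_Xmat_mul_inv_Ymat (ht : 0 < t) : (Xmat t * (Ymat s t)⁻¹).det = 1 := by
  simp [det_Xmat ht, det_Ymat ht]

theorem det_inv_Xmat_mul_Ymat (ht : 0 < t) : ((Xmat t)⁻¹ * Ymat s t).det = 1 := by
  simp [det_Xmat ht, det_Ymat ht]

theorem trace_Xmat_mul_inv_Ymat (ht : 0 < t) : (Xmat t * (Ymat s t)⁻¹).trace = s + 2 := by
  rw [Xmat_mul_inv_Ymat ht, Matrix.trace_fin_two_of, add_assoc, one_add_one_eq_two]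

theorem trace_inv_Xmat_mul_Ymat (ht : 0 < t) : ((Xmat t)⁻¹ * Ymat s t).trace = s + 2 := by
  rw [inv_Xmat_mul_Ymat ht, Matrix.trace_fin_two_of, add_assoc, one_add_one_eq_two]

theorem trace_Xmat_mul_inv_Ymat_mul_inv_Xmat_mul_Ymat (ht : 0 < t) :
    (Xmat t * (Ymat s t)⁻¹ * ((Xmat t)⁻¹ * Ymat s t)).trace =
      s * (s + 2 - t - 1 / t) + 2 := by
  rw [Xmat_mul_inv_Ymat ht, inv_Xmat_mul_Ymat ht, Matrix.mul_fin_two, Matrix.trace_fin_two_of]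
  ring

theorem det_Wmat (m : ℤ) (ht : 0 < t) : (Wmat m s t).det = 1 := by
  rw [Wmat, Matrix.det_mul, det_zpow_eq_one (det_Xmat_mul_inv_Ymat ht),
    det_zpow_eq_one (det_inv_Xmat_mul_Ymat ht), one_mul]

theorem trace_Wmat (m : ℤ) (ht : 0 < t) :
    (Wmat m s t).trace = s * (s + 2 - t - 1 / t) * gZ (m - 1) s ^ 2 + 2 := by
  have htrace : (Xmat t * (Ymat s t)⁻¹).trace = ((Xmat t)⁻¹ * Ymat s t).trace :=
    (trace_Xmat_mul_inv_Ymat ht).trans (trace_inv_Xmat_mul_Ymat ht).symm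
  rw [Wmat, trace_zpow_mul_zpow (det_Xmat_mul_inv_Ymat ht) (det_inv_Xmat_mul_Ymat ht) htrace,
    trace_Xmat_mul_inv_Ymat ht, trace_Xmat_mul_inv_Ymat_mul_inv_Xmat_mul_Ymat ht,
    ← gZ_eq_eval_chebyshevS]
  ring

theorem trace_Wmat_mem_Ioo {m : ℤ} (hm : m ≠ 0) (hs : 0 < s) (ht : 0 < t)
    (h1 : s + 2 < t + 1 / t) (h2 : t + 1 / t < s + 2 + 4 / (s * gZ (m - 1) s ^ 2)) :
    (Wmat m s t).trace ∈ Set.Ioo (-2) 2 := by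
  rw [trace_Wmat m ht]
  have hg : gZ (m - 1) s ≠ 0 := gZ_ne_zero (by omega) hs.le
  have hpos : 0 < s * gZ (m - 1) s ^ 2 := by positivity
  have hgap_pos : 0 < (t + 1 / t - (s + 2)) * (s * gZ (m - 1) s ^ 2) :=
    mul_pos (sub_pos.2 h1) hpos
  have hgap_lt : (t + 1 / t - (s + 2)) * (s * gZ (m - 1) s ^ 2) < 4 :=
    (lt_div_iff₀ hpos).1 (sub_left_lt_of_lt_add h2)
  constructor <;> linarith

theorem trace_W_general (m : ℤ) (hm : m ≠ 0) (s t : ℝ) (hs : 0 < s) (ht : 0 < t)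
    (h1 : s + 2 < t + 1 / t) (h2 : t + 1 / t < s + 2 + 4 / (s * gZ (m - 1) s ^ 2)) :
    (Wmat m s t).trace = s * (s + 2 - t - 1 / t) * gZ (m - 1) s ^ 2 + 2 ∧
    -2 < (Wmat m s t).trace ∧ (Wmat m s t).trace < 2 ∧ (Wmat m s t).det = 1 ∧
    ∃ lam₁ lam₂ : ℂ, lam₁ ≠ lam₂ ∧
      ((Wmat m s t).map Complex.ofReal).charpoly.IsRoot lam₁ ∧
      ((Wmat m s t).map Complex.ofReal).charpoly.IsRoot lam₂ := by
  obtain ⟨hlower, hupper⟩ := trace_Wmat_mem_Ioo hm hs ht h1 h2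
  refine ⟨trace_Wmat m ht, hlower, hupper, det_Wmat m ht, ?_⟩
  apply exists_ne_isRoot_charpoly_of_discr_ne_zero
  have hdiscr : (Wmat m s t).discr < 0 := discr_neg_of_det_eq_one (det_Wmat m ht) hlower hupper
  exact (discr_map_fin_two Complex.ofRealHom _).trans_ne (Complex.ofReal_ne_zero.2 hdiscr.ne)

end MatrixW

/-- The trace of `W = (XY⁻¹)^m (X⁻¹Y)^m` equals `s(s+2-t-1/t)g_{m-1}² + 2`, lies strictly
between `-2` and `2`, `W` has determinant `1`, and `W` has two distinct complex eigenvalues. -/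
theorem trace_W (m : ℤ) (hm : m ≠ 0) (s t : ℝ) (hs : 0 < s) (ht : 1 < t)
    (h1 : s + 2 < t + 1 / t) (h2 : t + 1 / t < s + 2 + 4 / (s * gZ (m - 1) s ^ 2)) :
    Matrix.trace ((Xmat t * (Ymat s t)⁻¹) ^ m * ((Xmat t)⁻¹ * Ymat s t) ^ m) =
      s * (s + 2 - t - 1 / t) * gZ (m - 1) s ^ 2 + 2 ∧
    (-2 : ℝ) < Matrix.trace ((Xmat t * (Ymat s t)⁻¹) ^ m * ((Xmat t)⁻¹ * Ymat s t) ^ m) ∧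
    Matrix.trace ((Xmat t * (Ymat s t)⁻¹) ^ m * ((Xmat t)⁻¹ * Ymat s t) ^ m) < 2 ∧
    ((Xmat t * (Ymat s t)⁻¹) ^ m * ((Xmat t)⁻¹ * Ymat s t) ^ m).det = 1 ∧
    ∃ lam₁ lam₂ : ℂ, lam₁ ≠ lam₂ ∧
      (((Xmat t * (Ymat s t)⁻¹) ^ m * ((Xmat t)⁻¹ * Ymat s t) ^ m).map
        (Complex.ofReal)).charpoly.IsRoot lam₁ ∧
      (((Xmat t * (Ymat s t)⁻¹) ^ m * ((Xmat t)⁻¹ * Ymat s t) ^ m).map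
        (Complex.ofReal)).charpoly.IsRoot lam₂ :=
  trace_W_general m hm s t hs (zero_lt_one.trans ht) h1 h2
end

section
/- Let m be a nonzero integer, let n ≤ -3 be an integer, set l = -n, and let s > 0 be a real number. Set d = 2 - 2cos(π/(2l-1)) and d' = 2 - 2cos(3π/(2l-1)). Then there exists a real number T with s + 2 + d/(s·g_{m-1}(s)²) < T < s + 2 + d'/(s·g_{m-1}(s)²) such that Φ(T) = 0, where Φ(T) = (U_n(τ(T)/2) - U_{n-1}(τ(T)/2)) + (s + 2 - T)·f_{m-1}(s)·g_{m-1}(s)·U_{n-1}(τ(T)/2) and τ(T) = s·(s + 2 - T)·g_{m-1}(s)² + 2. -/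
open Polynomial Real

/-!
Put `x = τ(T) / 2` and `c = 2 f_{m-1} / (s g_{m-1})`. Then
`T = s + 2 + (2 - 2x) / (s g_{m-1}²)`, and `Φ(T) = 0` becomes
`U_n(x) - U_{n-1}(x) - c (1 - x) U_{n-1}(x) = 0`. At `x = cos (2φ)` the identities
`(U_n - U_{n-1}) cos φ = cos ((2n+1)φ)` and `(U_n + U_{n-1}) sin φ = sin ((2n+1)φ)` show that, for
`(2n+1)φ` equal to `π/2` or `3π/2`, the difference `U_n - U_{n-1}` vanishes while `U_{n-1}` has
opposite signs in the two cases. So the equation has a root between the two values of `x`.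
-/

lemma pos_and_le_succ_of_recurrence {R : Type*} [CommRing R] [LinearOrder R] [IsStrictOrderedRing R]
    {s : R} (hs : 0 ≤ s) {u : ℕ → R} (h₀ : 0 < u 0) (h₁ : u 0 ≤ u 1)
    (hu : ∀ k, u (k + 2) = (s + 2) * u (k + 1) - u k) (k : ℕ) : 0 < u k ∧ u k ≤ u (k + 1) := by
  induction k with
  | zero => exact ⟨h₀, h₁⟩
  | succ k ih =>
    have hpos : 0 < u (k + 1) := ih.1.trans_le ih.2
    refine ⟨hpos, ?_⟩
    linarith [hu k, ih.2, mul_nonneg hs hpos.le]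

lemma fN_pos {s : ℝ} (hs : 0 ≤ s) (k : ℕ) : 0 < fN k s :=
  (pos_and_le_succ_of_recurrence hs (u := fun k => fN k s) one_pos
    (by simpa only [fN, le_add_iff_nonneg_left]) (fun _ => rfl) k).1

lemma gN_pos {s : ℝ} (hs : 0 ≤ s) (k : ℕ) : 0 < gN k s :=
  (pos_and_le_succ_of_recurrence hs (u := fun k => gN k s) one_pos
    (by simp only [gN]; linarith) (fun _ => rfl) k).1

lemma fZ_pos {s : ℝ} (hs : 0 ≤ s) : ∀ k : ℤ, 0 < fZ k s
  | Int.ofNat k => fN_pos hs k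
  | Int.negSucc k => fN_pos hs k

lemma gZ_ne_zero_s13 {s : ℝ} (hs : 0 ≤ s) : ∀ {k : ℤ}, k ≠ -1 → gZ k s ≠ 0
  | Int.ofNat k, _ => (gN_pos hs k).ne'
  | Int.negSucc 0, hk => absurd rfl hk
  | Int.negSucc (k + 1), _ => neg_ne_zero.mpr (gN_pos hs k).ne'

lemma chebyshevU_eq_cos_mul_add_cos (n : ℤ) (θ : ℝ) :
    (Chebyshev.U ℝ n).eval (cos θ) =
      cos θ * (Chebyshev.U ℝ (n - 1)).eval (cos θ) + cos (n * θ) := by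
  simpa using congrArg (eval (cos θ)) (Chebyshev.U_eq_X_mul_U_add_T ℝ (n - 1))

lemma chebyshevU_pred_mul_sin (n : ℤ) (θ : ℝ) :
    (Chebyshev.U ℝ (n - 1)).eval (cos θ) * sin θ = sin (n * θ) := by
  simp

lemma chebyshevU_sub_mul_cos (n : ℤ) (φ : ℝ) :
    ((Chebyshev.U ℝ n).eval (cos (2 * φ)) - (Chebyshev.U ℝ (n - 1)).eval (cos (2 * φ))) * cos φ =
      cos ((2 * n + 1) * φ) := by
  rw [show (2 * n + 1) * φ = n * (2 * φ) + φ by ring, cos_add, ← chebyshevU_pred_mul_sin,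
    chebyshevU_eq_cos_mul_add_cos, sin_two_mul, cos_two_mul]
  linear_combination
    2 * (Chebyshev.U ℝ (n - 1)).eval (2 * cos φ ^ 2 - 1) * cos φ * sin_sq_add_cos_sq φ

lemma chebyshevU_add_mul_sin (n : ℤ) (φ : ℝ) :
    ((Chebyshev.U ℝ n).eval (cos (2 * φ)) + (Chebyshev.U ℝ (n - 1)).eval (cos (2 * φ))) * sin φ =
      sin ((2 * n + 1) * φ) := by
  rw [show (2 * n + 1) * φ = n * (2 * φ) + φ by ring, sin_add, ← chebyshevU_pred_mul_sin,
    chebyshevU_eq_cos_mul_add_cos, sin_two_mul, cos_two_mul]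
  ring

lemma chebyshevU_eq_pred_of_cos_eq_zero {n : ℤ} {φ : ℝ} (hφ : cos φ ≠ 0)
    (h : cos ((2 * n + 1) * φ) = 0) :
    (Chebyshev.U ℝ n).eval (cos (2 * φ)) = (Chebyshev.U ℝ (n - 1)).eval (cos (2 * φ)) :=
  sub_eq_zero.mp <| (mul_eq_zero.mp <| (chebyshevU_sub_mul_cos n φ).trans h).resolve_right hφ

lemma cos_lt_cos_of_abs_lt_abs {x y : ℝ} (hxy : |x| < |y|) (hy : |y| ≤ π) : cos y < cos x := by
  rw [← cos_abs x, ← cos_abs y]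
  exact cos_lt_cos_of_nonneg_of_le_pi (abs_nonneg x) hy hxy

lemma sin_mul_sin_three_mul_pos {φ : ℝ} (h₀ : φ ≠ 0) (hφ : |φ| ≤ π / 4) :
    0 < sin φ * sin (3 * φ) := by
  have hcos : cos (4 * φ) < cos (2 * φ) := by
    have hpos : 0 < |φ| := abs_pos.mpr h₀
    apply cos_lt_cos_of_abs_lt_abs <;> simp only [abs_mul, Nat.abs_ofNat] <;> linarith
  have hprod : cos (2 * φ) - cos (4 * φ) = 2 * (sin φ * sin (3 * φ)) := by
    rw [cos_sub_cos, show (2 * φ + 4 * φ) / 2 = 3 * φ by ring,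
      show (2 * φ - 4 * φ) / 2 = -φ by ring, sin_neg]
    ring
  linarith

lemma exists_mem_Ioo_eq_zero_of_mul_neg {α R : Type*} [ConditionallyCompleteLinearOrder α]
    [TopologicalSpace α] [OrderTopology α] [DenselyOrdered α] [Ring R] [LinearOrder R]
    [IsStrictOrderedRing R] [TopologicalSpace R] [OrderClosedTopology R] {f : α → R} {a b : α}
    (hab : a ≤ b) (hf : ContinuousOn f (Set.Icc a b)) (h : f a * f b < 0) :
    ∃ x ∈ Set.Ioo a b, f x = 0 := by
  rcases mul_neg_iff.mp h with ⟨ha, hb⟩ | ⟨ha, hb⟩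
  · exact intermediate_value_Ioo' hab hf ⟨hb, ha⟩
  · exact intermediate_value_Ioo hab hf ⟨ha, hb⟩

section Nodes

variable {n : ℤ} {φ : ℝ}

lemma chebyshevU_eq_pred_at_nodes (hφ : |φ| < π / 6) (h : (2 * n + 1) * φ = π / 2) :
    (Chebyshev.U ℝ n).eval (cos (2 * φ)) = (Chebyshev.U ℝ (n - 1)).eval (cos (2 * φ)) ∧
      (Chebyshev.U ℝ n).eval (cos (6 * φ)) = (Chebyshev.U ℝ (n - 1)).eval (cos (6 * φ)) := by
  obtain ⟨hlo, hhi⟩ := abs_lt.mp hφ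
  have h₃ : (2 * n + 1) * (3 * φ) = π / 2 + π := by linarith
  rw [show 6 * φ = 2 * (3 * φ) by ring]
  constructor <;> apply chebyshevU_eq_pred_of_cos_eq_zero
  · exact (cos_pos_of_mem_Ioo ⟨by linarith, by linarith⟩).ne'
  · rw [h, cos_pi_div_two]
  · exact (cos_pos_of_mem_Ioo ⟨by linarith, by linarith⟩).ne'
  · rw [h₃, cos_add_pi, cos_pi_div_two, neg_zero]

lemma chebyshevU_pred_mul_neg_at_nodes (hφ : |φ| < π / 6) (h : (2 * n + 1) * φ = π / 2) :
    (Chebyshev.U ℝ (n - 1)).eval (cos (6 * φ)) *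
      (Chebyshev.U ℝ (n - 1)).eval (cos (2 * φ)) < 0 := by
  obtain ⟨heq₁, heq₃⟩ := chebyshevU_eq_pred_at_nodes hφ h
  have h₃ : (2 * n + 1) * (3 * φ) = π / 2 + π := by linarith
  have hval₁ := chebyshevU_add_mul_sin n φ
  have hval₃ := chebyshevU_add_mul_sin n (3 * φ)
  rw [heq₁, h, sin_pi_div_two] at hval₁
  rw [show 2 * (3 * φ) = 6 * φ by ring, heq₃, h₃, sin_add_pi, sin_pi_div_two] at hval₃
  have hφ₀ : φ ≠ 0 := right_ne_zero_of_mul (h ▸ pi_div_two_pos.ne')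
  have hsin := sin_mul_sin_three_mul_pos hφ₀ (by linarith [pi_pos])
  have hprod : (Chebyshev.U ℝ (n - 1)).eval (cos (6 * φ)) *
      (Chebyshev.U ℝ (n - 1)).eval (cos (2 * φ)) * (4 * (sin φ * sin (3 * φ))) = -1 := by
    linear_combination
      2 * (Chebyshev.U ℝ (n - 1)).eval (cos (6 * φ)) * sin (3 * φ) * hval₁ + hval₃
  exact neg_of_mul_neg_left (hprod.trans_lt neg_one_lt_zero) (by positivity)

lemma exists_chebyshevU_root_between_nodes (hφ : |φ| < π / 6) (h : (2 * n + 1) * φ = π / 2) {c : ℝ}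
    (hc : c ≠ 0) :
    ∃ x ∈ Set.Ioo (cos (6 * φ)) (cos (2 * φ)),
      (Chebyshev.U ℝ n).eval x - (Chebyshev.U ℝ (n - 1)).eval x -
        c * (1 - x) * (Chebyshev.U ℝ (n - 1)).eval x = 0 := by
  obtain ⟨heq₁, heq₃⟩ := chebyshevU_eq_pred_at_nodes hφ h
  have hφ₀ : 0 < |φ| := abs_pos.mpr <| right_ne_zero_of_mul (h ▸ pi_div_two_pos.ne')
  have hlt : cos (6 * φ) < cos (2 * φ) := by
    apply cos_lt_cos_of_abs_lt_abs <;> simp only [abs_mul, Nat.abs_ofNat] <;> linarith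
  have hlt_one : cos (2 * φ) < 1 := by
    rw [← cos_zero]
    apply cos_lt_cos_of_abs_lt_abs <;> simp only [abs_mul, Nat.abs_ofNat, abs_zero] <;> linarith
  refine exists_mem_Ioo_eq_zero_of_mul_neg hlt.le (by fun_prop) ?_
  rw [heq₁, heq₃, sub_self, sub_self, zero_sub, zero_sub, neg_mul_neg, mul_mul_mul_comm]
  refine mul_neg_of_pos_of_neg ?_ (chebyshevU_pred_mul_neg_at_nodes hφ h)
  rw [mul_mul_mul_comm]
  exact mul_pos (mul_self_pos.mpr hc) (mul_pos (by linarith) (by linarith))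

end Nodes

theorem riley_root_exists_neg_general (m n : ℤ) (hm : m ≠ 0) (hn : 3 < |2 * n + 1|) (s : ℝ)
    (hs : 0 < s) :
    ∃ T : ℝ,
      s + 2 + (2 - 2 * cos (π / (2 * n + 1))) / (s * gZ (m - 1) s ^ 2) < T ∧
      T < s + 2 + (2 - 2 * cos (3 * π / (2 * n + 1))) / (s * gZ (m - 1) s ^ 2) ∧
      ((Chebyshev.U ℝ n).eval ((s * (s + 2 - T) * gZ (m - 1) s ^ 2 + 2) / 2) -
        (Chebyshev.U ℝ (n - 1)).eval ((s * (s + 2 - T) * gZ (m - 1) s ^ 2 + 2) / 2)) +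
      (s + 2 - T) * fZ (m - 1) s * gZ (m - 1) s *
        (Chebyshev.U ℝ (n - 1)).eval ((s * (s + 2 - T) * gZ (m - 1) s ^ 2 + 2) / 2) = 0 := by
  have hf : fZ (m - 1) s ≠ 0 := (fZ_pos hs.le _).ne'
  have hg : gZ (m - 1) s ≠ 0 := gZ_ne_zero_s13 hs.le (by omega)
  generalize fZ (m - 1) s = f at *
  generalize gZ (m - 1) s = g at *
  have hκ : 3 < |2 * (n : ℝ) + 1| := mod_cast hn
  have hκ₀ : 2 * (n : ℝ) + 1 ≠ 0 := abs_pos.mp (by linarith)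
  set φ := π / 2 / (2 * n + 1) with hφ
  have hφ_lt : |φ| < π / 6 := by
    rw [hφ, abs_div, abs_of_pos pi_div_two_pos, div_lt_iff₀ (by linarith)]
    linarith [mul_lt_mul_of_pos_left hκ pi_pos]
  obtain ⟨x, ⟨hlo, hhi⟩, hx⟩ := exists_chebyshevU_root_between_nodes hφ_lt
    (mul_div_cancel₀ _ hκ₀) (c := 2 * f / (s * g)) (by positivity)
  have hτ : (s * (s + 2 - (s + 2 + (2 - 2 * x) / (s * g ^ 2))) * g ^ 2 + 2) / 2 = x := by
    field_simp
    ring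
  have hcoeff : (s + 2 - (s + 2 + (2 - 2 * x) / (s * g ^ 2))) * f * g =
      -(2 * f / (s * g) * (1 - x)) := by
    field_simp
    ring
  rw [show π / (2 * n + 1) = 2 * φ by rw [hφ]; ring,
    show 3 * π / (2 * n + 1) = 6 * φ by rw [hφ]; ring]
  refine ⟨s + 2 + (2 - 2 * x) / (s * g ^ 2), by gcongr, by gcongr, ?_⟩
  rw [hτ, hcoeff, neg_mul, ← sub_eq_add_neg, hx]

/-- For `m ≠ 0`, `n ≤ -3`, `l = -n` and `s > 0`, the function
`Φ(T) = (U_n(τ(T)/2) - U_{n-1}(τ(T)/2)) + (s+2-T) f_{m-1} g_{m-1} U_{n-1}(τ(T)/2)`,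
with `τ(T) = s(s+2-T) g_{m-1}² + 2`, has a zero `T` with
`s + 2 + d/(s g_{m-1}²) < T < s + 2 + d'/(s g_{m-1}²)`, where `d = 2 - 2cos(π/(2l-1))`
and `d' = 2 - 2cos(3π/(2l-1))`. -/
theorem riley_root_exists_neg (m n : ℤ) (hm : m ≠ 0) (hn : n ≤ -3) (s : ℝ) (hs : 0 < s) :
    ∃ T : ℝ,
      s + 2 + (2 - 2 * Real.cos (π / (2 * (-n) - 1))) / (s * gZ (m - 1) s ^ 2) < T ∧
      T < s + 2 + (2 - 2 * Real.cos (3 * π / (2 * (-n) - 1))) / (s * gZ (m - 1) s ^ 2) ∧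
      ((Polynomial.Chebyshev.U ℝ n).eval ((s * (s + 2 - T) * gZ (m - 1) s ^ 2 + 2) / 2) -
        (Polynomial.Chebyshev.U ℝ (n - 1)).eval
          ((s * (s + 2 - T) * gZ (m - 1) s ^ 2 + 2) / 2)) +
      (s + 2 - T) * fZ (m - 1) s * gZ (m - 1) s *
        (Polynomial.Chebyshev.U ℝ (n - 1)).eval
          ((s * (s + 2 - T) * gZ (m - 1) s ^ 2 + 2) / 2) = 0 := by
  have hden : 2 * -(n : ℝ) - 1 = -(2 * n + 1) := by ring
  simpa only [hden, div_neg, cos_neg] using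
    riley_root_exists_neg_general m n hm (by rw [lt_abs]; omega) s hs
end

section
/- Let m be a nonzero integer and n an integer, and let s, t be real numbers with s > 0, t > 1 and s + 2 < t + 1/t < s + 2 + 4/(s·g_{m-1}(s)²). Let U = (X'Y'⁻¹)^m (X'⁻¹Y')^m and U_* = (Y'X'⁻¹)^m (Y'⁻¹X')^m, and assume the relation U^n · X' = Y' · U^n holds. Then the matrix M = U_*^n · U^n is diagonal (its (1,2)- and (2,1)-entries vanish) and its (1,1)-entry is a positive real number. -/
open Matrix

/-- The matrix `X' = [[√t, 0], [0, 1/√t]]`. -/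
noncomputable def Xmat' (t : ℝ) : Matrix (Fin 2) (Fin 2) ℝ :=
  !![Real.sqrt t, 0; 0, 1 / Real.sqrt t]

/-- The matrix `Y' = [[(t-s-1)/(√t-1/√t), s/(√t-1/√t)² - 1], [-s, (s+1-1/t)/(√t-1/√t)]]`. -/
noncomputable def Ymat' (s t : ℝ) : Matrix (Fin 2) (Fin 2) ℝ :=
  !![(t - s - 1) / (Real.sqrt t - 1 / Real.sqrt t),
     s / (Real.sqrt t - 1 / Real.sqrt t) ^ 2 - 1;
     -s, (s + 1 - 1 / t) / (Real.sqrt t - 1 / Real.sqrt t)]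

/-!
There is a positive definite diagonal form `J` for which `X'` and `Y'` are both self-adjoint. Taking
adjoints reverses words, so `U_*` is the adjoint of `U`, and the adjoint of the relation
`U^n X' = Y' U^n` is `X' U_*^n = U_*^n Y'`. Together they show that `M = U_*^n U^n` commutes with
`X'`, a diagonal matrix with distinct eigenvalues, so `M` is diagonal; and `J M = (U^n)ᵀ J U^n` is
positive definite, so the diagonal entries of `M` are positive.
-/

section AdjointPair

variable {R ι κ τ : Type*} [CommRing R] [Fintype ι] [Fintype κ] [Fintype τ]

theorem isAdjointPair_mul {J₁ : Matrix ι ι R} {J₂ : Matrix κ κ R} {J₃ : Matrix τ τ R}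
    {A : Matrix κ ι R} {A' : Matrix ι κ R} {B : Matrix τ κ R} {B' : Matrix κ τ R}
    (hB : J₂.IsAdjointPair J₃ B B') (hA : J₁.IsAdjointPair J₂ A A') :
    J₁.IsAdjointPair J₃ (B * A) (A' * B') :=
  calc (B * A)ᵀ * J₃ = Aᵀ * (Bᵀ * J₃) := by rw [transpose_mul, Matrix.mul_assoc]
    _ = Aᵀ * J₂ * B' := by rw [hB, Matrix.mul_assoc]
    _ = J₁ * (A' * B') := by rw [hA, Matrix.mul_assoc]

theorem posDef_mul_mul_of_isAdjointPair [PartialOrder R] [StarRing R] [TrivialStar R]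
    {J₁ : Matrix ι ι R} {J₂ : Matrix κ κ R} {A : Matrix κ ι R} {A' : Matrix ι κ R}
    (hJ₂ : J₂.PosDef) (hAA' : J₁.IsAdjointPair J₂ A A') (hA : Function.Injective A.mulVec) :
    (J₁ * (A' * A)).PosDef := by
  have hform : J₁ * (A' * A) = Aᴴ * J₂ * A := by
    rw [conjTranspose_eq_transpose_of_trivial, hAA', Matrix.mul_assoc]
  exact hform ▸ hJ₂.conjTranspose_mul_mul_same hA

variable [DecidableEq ι]

theorem isAdjointPair_right_unique {J₁ : Matrix ι ι R} {J₂ : Matrix κ κ R} {A : Matrix κ ι R}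
    {A' A'' : Matrix ι κ R} (hJ₁ : IsUnit J₁) (h' : J₁.IsAdjointPair J₂ A A')
    (h'' : J₁.IsAdjointPair J₂ A A'') : A' = A'' := by
  have := hJ₁.invertible
  exact (Matrix.mul_right_inj_of_invertible J₁).mp (h'.symm.trans h'')

variable {J A A' : Matrix ι ι R}

theorem isAdjointPair_inv (hJ : IsUnit J) (hA : J.IsAdjointPair J A A') :
    J.IsAdjointPair J A⁻¹ A'⁻¹ := by
  have := hJ.invertible
  have hA' : Aᵀ = J * A' * J⁻¹ := by
    rw [← hA, mul_inv_cancel_right_of_invertible]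
  have hAinv : (A⁻¹)ᵀ = J * A'⁻¹ * J⁻¹ := by
    rw [transpose_nonsing_inv, hA', Matrix.mul_inv_rev, Matrix.mul_inv_rev,
      inv_inv_of_invertible, Matrix.mul_assoc]
  rw [Matrix.IsAdjointPair, hAinv, inv_mul_cancel_right_of_invertible]

theorem isAdjointPair_pow (hA : J.IsAdjointPair J A A') (k : ℕ) :
    J.IsAdjointPair J (A ^ k) (A' ^ k) := by
  have hconj : SemiconjBy J A' Aᵀ := Eq.symm hA
  rw [Matrix.IsAdjointPair, transpose_pow, (hconj.pow_right k).eq]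

theorem isAdjointPair_zpow (hJ : IsUnit J) (hA : J.IsAdjointPair J A A') :
    ∀ k : ℤ, J.IsAdjointPair J (A ^ k) (A' ^ k)
  | .ofNat k => by simpa only [Int.ofNat_eq_natCast, zpow_natCast] using isAdjointPair_pow hA k
  | .negSucc k => by
    simpa only [zpow_negSucc] using isAdjointPair_inv hJ (isAdjointPair_pow hA (k + 1))

theorem semiconjBy_of_isAdjointPair {X Y W V : Matrix ι ι R} (hJ : IsUnit J)
    (hX : J.IsSelfAdjoint X) (hY : J.IsSelfAdjoint Y) (hWV : J.IsAdjointPair J W V)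
    (hW : SemiconjBy W X Y) : SemiconjBy V Y X := by
  have hWX : J.IsAdjointPair J (W * X) (X * V) := isAdjointPair_mul hWV hX
  have hYW : J.IsAdjointPair J (Y * W) (V * Y) := isAdjointPair_mul hY hWV
  exact isAdjointPair_right_unique hJ hYW (hW.eq ▸ hWX)

theorem commute_mul_of_isAdjointPair {X Y W V : Matrix ι ι R} (hJ : IsUnit J)
    (hX : J.IsSelfAdjoint X) (hY : J.IsSelfAdjoint Y) (hWV : J.IsAdjointPair J W V)
    (hW : SemiconjBy W X Y) : Commute (V * W) X :=
  (semiconjBy_of_isAdjointPair hJ hX hY hWV hW).mul_left hW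

end AdjointPair

section Diagonal

variable {R ι : Type*} [Fintype ι] [DecidableEq ι]

theorem isDiag_of_commute_diagonal [CommRing R] [NoZeroDivisors R] {d : ι → R}
    (hd : Function.Injective d) {M : Matrix ι ι R} (hM : Commute M (diagonal d)) : M.IsDiag := by
  intro i j hij
  have hentry : M i j * d j = d i * M i j := by
    simpa only [mul_diagonal, diagonal_mul] using congr_fun₂ hM.eq i j
  have hprod : (d j - d i) * M i j = 0 := by linear_combination hentry
  exact (mul_eq_zero.mp hprod).resolve_left (sub_ne_zero.mpr (hd.ne hij.symm))

theorem diag_pos_of_posDef_diagonal_mul [Ring R] [LinearOrder R] [IsStrictOrderedRing R]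
    [StarRing R] {d : ι → R} {M : Matrix ι ι R} (hM : (diagonal d * M).PosDef) {i : ι}
    (hd : 0 < d i) : 0 < M i i := by
  have hentry : 0 < d i * M i i := by simpa only [diagonal_mul] using hM.diag_pos (i := i)
  exact (mul_pos_iff_of_pos_left hd).mp hentry

end Diagonal

section RelationWord

variable {R ι : Type*} [CommRing R] [Fintype ι] [DecidableEq ι]

/-- The word `U = (x y⁻¹)^m (x⁻¹ y)^m` of the knot group relation `U^n x = y U^n`, evaluated at two
matrices. The reversed word `U_* = (y x⁻¹)^m (y⁻¹ x)^m` is obtained by exchanging the arguments. -/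
noncomputable def relationWord (m : ℤ) (X Y : Matrix ι ι R) : Matrix ι ι R :=
  (X * Y⁻¹) ^ m * (X⁻¹ * Y) ^ m

theorem isUnit_matrix_zpow {A : Matrix ι ι R} (hA : IsUnit A) (k : ℤ) : IsUnit (A ^ k) :=
  (isUnit_iff_isUnit_det _).mpr (((isUnit_iff_isUnit_det A).mp hA).det_zpow k)

theorem isUnit_relationWord {X Y : Matrix ι ι R} (hX : IsUnit X) (hY : IsUnit Y) (m : ℤ) :
    IsUnit (relationWord m X Y) :=
  (isUnit_matrix_zpow (hX.mul (isUnit_nonsing_inv_iff.mpr hY)) m).mul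
    (isUnit_matrix_zpow ((isUnit_nonsing_inv_iff.mpr hX).mul hY) m)

theorem isAdjointPair_relationWord {J X Y : Matrix ι ι R} (hJ : IsUnit J)
    (hX : J.IsSelfAdjoint X) (hY : J.IsSelfAdjoint Y) (m : ℤ) :
    J.IsAdjointPair J (relationWord m X Y) (relationWord m Y X) :=
  isAdjointPair_mul (isAdjointPair_zpow hJ (isAdjointPair_mul hX (isAdjointPair_inv hJ hY)) m)
    (isAdjointPair_zpow hJ (isAdjointPair_mul (isAdjointPair_inv hJ hX) hY) m)

end RelationWord

section Representation

variable {s t : ℝ}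

theorem sqrt_sub_one_div_sqrt_sq (ht : 0 < t) : (√t - 1 / √t) ^ 2 = t + 1 / t - 2 := by
  have hsqrt : √t ≠ 0 := (Real.sqrt_pos.mpr ht).ne'
  calc (√t - 1 / √t) ^ 2 = √t ^ 2 + 1 / √t ^ 2 - 2 := by field_simp; ring
    _ = t + 1 / t - 2 := by rw [Real.sq_sqrt ht.le]

theorem isUnit_Xmat' (ht : 0 < t) : IsUnit (Xmat' t) := by
  have hsqrt : √t ≠ 0 := (Real.sqrt_pos.mpr ht).ne'
  have hdet : (Xmat' t).det = 1 := by
    rw [Xmat', det_fin_two_of, mul_one_div_cancel hsqrt, mul_zero, sub_zero]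
  exact (isUnit_iff_isUnit_det _).mpr (hdet ▸ isUnit_one)

theorem isUnit_Ymat' (s : ℝ) (ht : 0 < t) (hδ : √t - 1 / √t ≠ 0) : IsUnit (Ymat' s t) := by
  have hdiag : (t - s - 1) * (s + 1 - 1 / t) = (s + 1) * (√t - 1 / √t) ^ 2 - s ^ 2 := by
    rw [sqrt_sub_one_div_sqrt_sq ht]
    field_simp
    ring
  have hdet : (Ymat' s t).det = 1 := by
    rw [Ymat', det_fin_two_of, div_mul_div_comm, hdiag]
    generalize √t - 1 / √t = δ at hδ
    field_simp
    ring
  exact (isUnit_iff_isUnit_det _).mpr (hdet ▸ isUnit_one)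

/-- The diagonal entries of the symmetric bilinear form `J` for which `Xmat' t` and `Ymat' s t` are
self-adjoint. -/
noncomputable def formDiag (s t : ℝ) : Fin 2 → ℝ :=
  ![s, 1 - s / (√t - 1 / √t) ^ 2]

theorem formDiag_pos (hs : 0 < s) (hst : s < (√t - 1 / √t) ^ 2) (i : Fin 2) :
    0 < formDiag s t i := by
  fin_cases i
  · exact hs
  · exact sub_pos.mpr ((div_lt_one (hs.trans hst)).mpr hst)

theorem Xmat'_eq_diagonal (t : ℝ) : Xmat' t = diagonal ![√t, 1 / √t] := by
  rw [Xmat', diagonal_fin_two]; rfl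

theorem isSelfAdjoint_diagonal_Xmat' (d : Fin 2 → ℝ) (t : ℝ) :
    (diagonal d).IsSelfAdjoint (Xmat' t) := by
  rw [Xmat'_eq_diagonal, Matrix.IsSelfAdjoint, Matrix.IsAdjointPair, diagonal_transpose,
    (commute_diagonal _ d).eq]

theorem isSelfAdjoint_formDiag_Ymat' (s t : ℝ) :
    (diagonal (formDiag s t)).IsSelfAdjoint (Ymat' s t) := by
  have hoff : -s * (1 - s / (√t - 1 / √t) ^ 2) = s * (s / (√t - 1 / √t) ^ 2 - 1) := by ring
  unfold Matrix.IsSelfAdjoint Matrix.IsAdjointPair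
  ext i j
  rw [mul_diagonal, diagonal_mul, transpose_apply]
  fin_cases i <;> fin_cases j
  · exact mul_comm _ _
  · exact hoff
  · exact (mul_comm _ _).trans (hoff.symm.trans (mul_comm _ _))
  · exact mul_comm _ _

end Representation

theorem longitude_diagonal_general (m n : ℤ) (s t : ℝ) (hs : 0 < s) (hst : s + 2 < t + 1 / t)
    (hrel : relationWord m (Xmat' t) (Ymat' s t) ^ n * Xmat' t =
      Ymat' s t * relationWord m (Xmat' t) (Ymat' s t) ^ n) :
    (relationWord m (Ymat' s t) (Xmat' t) ^ n *
      relationWord m (Xmat' t) (Ymat' s t) ^ n).IsDiag ∧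
    ∀ i, 0 < (relationWord m (Ymat' s t) (Xmat' t) ^ n *
      relationWord m (Xmat' t) (Ymat' s t) ^ n) i i := by
  have ht : 0 < t := by
    by_contra! ht
    linarith [one_div_nonpos.mpr ht]
  have hδ : s < (√t - 1 / √t) ^ 2 := by linarith [sqrt_sub_one_div_sqrt_sq ht]
  have hδ₀ : √t - 1 / √t ≠ 0 := sq_pos_iff.mp (hs.trans hδ)
  have hd := formDiag_pos hs hδ
  have hJ : (diagonal (formDiag s t)).PosDef := .diagonal hd
  have hX := isSelfAdjoint_diagonal_Xmat' (formDiag s t) t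
  have hY := isSelfAdjoint_formDiag_Ymat' s t
  have hadj := isAdjointPair_zpow hJ.isUnit (isAdjointPair_relationWord hJ.isUnit hX hY m) n
  have hunit := isUnit_matrix_zpow
    (isUnit_relationWord (isUnit_Xmat' ht) (isUnit_Ymat' s ht hδ₀) m) n
  have hcomm := commute_mul_of_isAdjointPair hJ.isUnit hX hY hadj hrel
  have heig : Function.Injective ![√t, 1 / √t] := by
    simpa [Function.Injective, Fin.forall_fin_two, eq_comm] using sub_ne_zero.mp hδ₀
  exact ⟨isDiag_of_commute_diagonal heig (Xmat'_eq_diagonal t ▸ hcomm), fun i =>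
    diag_pos_of_posDef_diagonal_mul
      (posDef_mul_mul_of_isAdjointPair hJ hadj (mulVec_injective_of_isUnit hunit)) (hd i)⟩

/-- If the assignment `x ↦ X'`, `y ↦ Y'` satisfies the knot-group relation
`U^n X' = Y' U^n`, then the image `M = U_*^n U^n` of the longitude is a diagonal matrix
whose `(1,1)`-entry is positive. -/
theorem longitude_diagonal (m : ℤ) (hm : m ≠ 0) (n : ℤ) (s t : ℝ) (hs : 0 < s) (ht : 1 < t)
    (h1 : s + 2 < t + 1 / t) (h2 : t + 1 / t < s + 2 + 4 / (s * gZ (m - 1) s ^ 2))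
    (hrel : ((Xmat' t * (Ymat' s t)⁻¹) ^ m * ((Xmat' t)⁻¹ * Ymat' s t) ^ m) ^ n * Xmat' t =
      Ymat' s t * ((Xmat' t * (Ymat' s t)⁻¹) ^ m * ((Xmat' t)⁻¹ * Ymat' s t) ^ m) ^ n) :
    (((Ymat' s t * (Xmat' t)⁻¹) ^ m * ((Ymat' s t)⁻¹ * Xmat' t) ^ m) ^ n *
        ((Xmat' t * (Ymat' s t)⁻¹) ^ m * ((Xmat' t)⁻¹ * Ymat' s t) ^ m) ^ n) 0 1 = 0 ∧
    (((Ymat' s t * (Xmat' t)⁻¹) ^ m * ((Ymat' s t)⁻¹ * Xmat' t) ^ m) ^ n *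
        ((Xmat' t * (Ymat' s t)⁻¹) ^ m * ((Xmat' t)⁻¹ * Ymat' s t) ^ m) ^ n) 1 0 = 0 ∧
    0 < (((Ymat' s t * (Xmat' t)⁻¹) ^ m * ((Ymat' s t)⁻¹ * Xmat' t) ^ m) ^ n *
        ((Xmat' t * (Ymat' s t)⁻¹) ^ m * ((Xmat' t)⁻¹ * Ymat' s t) ^ m) ^ n) 0 0 := by
  have ⟨hdiag, hpos⟩ := longitude_diagonal_general m n s t hs h1 hrel
  exact ⟨hdiag (by decide), hdiag (by decide), hpos 0⟩
end

section
/- Let m be a nonzero integer and n an integer, and let s, t be real numbers with s > 0, t > 1 and s + 2 < t + 1/t < s + 2 + 4/(s·g_{m-1}(s)²). Let U = (X'Y'⁻¹)^m (X'⁻¹Y')^m and U_* = (Y'X'⁻¹)^m (Y'⁻¹X')^m, and assume the relation U^n · X' = Y' · U^n holds. Then the (1,1)-entry of the matrix M = U_*^n · U^n equals (-f_m(s) + t·f_{m-1}(s)) / (-f_{m-1}(s) + t·f_m(s)) (the denominator being nonzero). -/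
open Matrix

/-! A `2 × 2` matrix `A` of determinant `1` satisfies `A ^ k = S_{k-1}(tr A) A - S_{k-2}(tr A)`, so
the off-diagonal entries of `U ^ n` are proportional to those of `U`, which are explicit products of
Chebyshev polynomials at `s + 2 = tr (X' Y'⁻¹)`. The relation `U ^ n X' = Y' U ^ n` leaves so little
freedom that `(U ^ n)₀₁ = 0` would force `det (U ^ n) = 0`; hence `U₀₁ ≠ 0`, and the denominator of
the formula is a factor of `√t U₀₁`. Finally, some diagonal matrix `P` satisfies `P X'ᵀ = X' P` and
`P Y'ᵀ = Y' P`. Transposition reverses words, so `P (U ^ n)ᵀ = U_* ^ n P`, which expresses `U_* ^ n`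
through `U ^ n` and reduces the entry of `U_* ^ n U ^ n` to a multiple of `U₁₀ / U₀₁`. -/

open Polynomial Polynomial.Chebyshev

/-- The Chebyshev polynomial of the third kind, rescaled in the same way as `S`, so that `f_m(s)` is
its value at `s + 2`. -/
noncomputable def chebyshevV (R : Type*) [CommRing R] (m : ℤ) : R[X] :=
  S R m - S R (m - 1)

/-- The word `(x y⁻¹)^m (x⁻¹ y)^m`: it is the word `U` of the knot group of `K(m, n)`, and
interchanging the generators turns it into the reversed word `U_*`. -/
def twistWord {G : Type*} [DivInvMonoid G] (x y : G) (m : ℤ) : G :=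
  (x * y⁻¹) ^ m * (x⁻¹ * y) ^ m

/-- The matrix `X'` over a field, with eigenvalue `a` in the role of `√t`. -/
def repX {K : Type*} [Field K] (a : K) : Matrix (Fin 2) (Fin 2) K :=
  !![a, 0; 0, a⁻¹]

/-- The matrix `Y'` over a field, with `a` in the role of `√t`. The diagonal entries are written as
deviations from the eigenvalues `a` and `a⁻¹`. -/
def repY {K : Type*} [Field K] (a s : K) : Matrix (Fin 2) (Fin 2) K :=
  !![a - s / (a - a⁻¹), s / (a - a⁻¹) ^ 2 - 1; -s, a⁻¹ + s / (a - a⁻¹)]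

section Determinant

variable {ι R : Type*} [Fintype ι] [DecidableEq ι] [CommRing R] {X Y : Matrix ι ι R}

theorem det_inv_eq_one (hX : X.det = 1) : X⁻¹.det = 1 := by
  rw [det_nonsing_inv, hX, Ring.inverse_one]

theorem det_mul_eq_one (hX : X.det = 1) (hY : Y.det = 1) : (X * Y).det = 1 := by
  rw [det_mul, hX, hY, one_mul]

theorem det_zpow_eq_one_s16 (hX : X.det = 1) : ∀ k : ℤ, (X ^ k).det = 1
  | .ofNat k => by rw [Int.ofNat_eq_natCast, zpow_natCast, det_pow, hX, one_pow]
  | .negSucc k => by rw [zpow_negSucc, det_inv_eq_one (by rw [det_pow, hX, one_pow])]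

theorem det_twistWord (hX : X.det = 1) (hY : Y.det = 1) (m : ℤ) : (twistWord X Y m).det = 1 :=
  det_mul_eq_one (det_zpow_eq_one_s16 (det_mul_eq_one hX (det_inv_eq_one hY)) m)
    (det_zpow_eq_one_s16 (det_mul_eq_one (det_inv_eq_one hX) hY) m)

end Determinant

section Chebyshev

variable {R : Type*} [CommRing R]

theorem inv_eq_trace_smul_one_sub {A : Matrix (Fin 2) (Fin 2) R} (hA : A.det = 1) :
    A⁻¹ = A.trace • (1 : Matrix (Fin 2) (Fin 2) R) - A := by
  rw [inv_def, hA, Ring.inverse_one, one_smul, adjugate_fin_two, trace_fin_two]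
  ext i j
  fin_cases i <;> fin_cases j <;> simp

theorem zpow_eq_chebyshev_smul_sub {A : Matrix (Fin 2) (Fin 2) R} (hA : A.det = 1) (k : ℤ) :
    A ^ k = (S R (k - 1)).eval A.trace • A
      - (S R (k - 2)).eval A.trace • (1 : Matrix (Fin 2) (Fin 2) R) := by
  have hunit : IsUnit A.det := hA ▸ isUnit_one
  have hinv := inv_eq_trace_smul_one_sub hA
  have hsq : A * A = A.trace • A - 1 := by
    have h := mul_nonsing_inv A hunit
    rw [hinv, mul_sub, mul_smul_comm, mul_one] at h
    rw [← h, sub_sub_cancel]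
  induction k using Int.induction_on with
  | zero => simp
  | succ i ih =>
    have hS : (S R i).eval A.trace
        = A.trace * (S R (i - 1)).eval A.trace - (S R (i - 2)).eval A.trace := by
      simp [S_eq R i]
    rw [zpow_add_one hunit, ih, sub_mul, smul_mul_assoc, hsq, smul_mul_assoc, one_mul,
      add_sub_cancel_right, show (i : ℤ) + 1 - 2 = i - 1 by ring, hS]
    module
  | pred i ih =>
    have hS : (S R (-i - 1 - 2)).eval A.trace
        = A.trace * (S R (-i - 2)).eval A.trace - (S R (-i - 1)).eval A.trace := by
      rw [S_sub_two, show (-i - 1 - 1 : ℤ) = -i - 2 by ring]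
      simp
    rw [zpow_sub_one hunit, ih, sub_mul, smul_mul_assoc, mul_nonsing_inv A hunit, smul_mul_assoc,
      one_mul, hinv, hS, show (-i - 1 - 1 : ℤ) = -i - 2 by ring]
    module

theorem zpow_apply_of_ne {A : Matrix (Fin 2) (Fin 2) R} (hA : A.det = 1) (k : ℤ) {i j : Fin 2}
    (hij : i ≠ j) : (A ^ k) i j = (S R (k - 1)).eval A.trace * A i j := by
  simp [zpow_eq_chebyshev_smul_sub hA k, one_apply_ne hij]

theorem trace_inv_mul_eq_trace_mul_inv {X Y : Matrix (Fin 2) (Fin 2) R} (hX : X.det = 1)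
    (hY : Y.det = 1) : (X⁻¹ * Y).trace = (X * Y⁻¹).trace := by
  simp only [inv_eq_trace_smul_one_sub hX, inv_eq_trace_smul_one_sub hY, sub_mul, mul_sub,
    smul_mul_assoc, mul_smul_comm, one_mul, mul_one, trace_sub, trace_smul, smul_eq_mul, mul_comm]

theorem twistWord_apply_of_ne {X Y : Matrix (Fin 2) (Fin 2) R} (hX : X.det = 1) (hY : Y.det = 1)
    (m : ℤ) {i j : Fin 2} (hij : i ≠ j) :
    twistWord X Y m i j = (S R (m - 1)).eval (X * Y⁻¹).trace
      * ((S R (m - 1)).eval (X * Y⁻¹).trace * ((X * Y⁻¹) * (X⁻¹ * Y)) i j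
        - (S R (m - 2)).eval (X * Y⁻¹).trace * (X * Y⁻¹ + X⁻¹ * Y) i j) := by
  rw [twistWord, zpow_eq_chebyshev_smul_sub (det_mul_eq_one hX (det_inv_eq_one hY)),
    zpow_eq_chebyshev_smul_sub (det_mul_eq_one (det_inv_eq_one hX) hY),
    trace_inv_mul_eq_trace_mul_inv hX hY]
  simp only [sub_mul, mul_sub, smul_mul_assoc, mul_smul_comm, one_mul, mul_one,
    Matrix.sub_apply, Matrix.smul_apply, Matrix.add_apply, smul_eq_mul, one_apply_ne hij]
  ring

theorem chebyshevV_add_two (m : ℤ) :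
    chebyshevV R (m + 2) = X * chebyshevV R (m + 1) - chebyshevV R m := by
  have hpred := S_add_two R (m - 1)
  rw [show m - 1 + 2 = m + 2 - 1 by ring, show m - 1 + 1 = m + 1 - 1 by ring] at hpred
  rw [chebyshevV, chebyshevV, chebyshevV, S_add_two, hpred]
  ring

theorem chebyshevV_neg_sub_one (m : ℤ) : chebyshevV R (-m - 1) = chebyshevV R m := by
  rw [chebyshevV, chebyshevV, S_neg_sub_one, show -m - 1 - 1 = -m - 2 by ring, S_neg_sub_two]
  ring

end Chebyshev

theorem fN_eq_eval_chebyshevV (k : ℕ) (s : ℝ) : fN k s = (chebyshevV ℝ k).eval (s + 2) := by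
  induction k using Nat.twoStepInduction with
  | zero => simp [fN, chebyshevV]
  | one => norm_num [fN, chebyshevV, add_sub_assoc]
  | more k ih₀ ih₁ =>
    calc fN (k + 2) s = (s + 2) * fN (k + 1) s - fN k s := rfl
      _ = (chebyshevV ℝ ↑(k + 2)).eval (s + 2) := by
        rw [ih₀, ih₁]
        push_cast
        rw [chebyshevV_add_two, eval_sub, eval_mul, eval_X]

theorem fZ_eq_eval_chebyshevV (m : ℤ) (s : ℝ) : fZ m s = (chebyshevV ℝ m).eval (s + 2) := by
  cases m with
  | ofNat k => exact fN_eq_eval_chebyshevV k s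
  | negSucc k =>
    calc fZ (Int.negSucc k) s = fN k s := rfl
      _ = (chebyshevV ℝ (Int.negSucc k)).eval (s + 2) := by
        rw [Int.negSucc_eq, neg_add', chebyshevV_neg_sub_one, fN_eq_eval_chebyshevV]

section Reversal

theorem semiconjBy_twistWord_zpow {M : Type*} [Monoid M] {p : M} {x x' y y' : Mˣ}
    (hx : SemiconjBy p x x') (hy : SemiconjBy p y y') (m n : ℤ) :
    SemiconjBy p ↑(twistWord x y m ^ n) ↑(twistWord x' y' m ^ n) := by
  have hleft : SemiconjBy p ↑(x * y⁻¹) ↑(x' * y'⁻¹) := by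
    push_cast
    exact hx.mul_right hy.units_inv_right
  have hright : SemiconjBy p ↑(x⁻¹ * y) ↑(x'⁻¹ * y') := by
    push_cast
    exact hx.units_inv_right.mul_right hy
  refine SemiconjBy.units_zpow_right ?_ n
  push_cast [twistWord]
  exact (hleft.units_zpow_right m).mul_right (hright.units_zpow_right m)

variable {ι R : Type*} [Fintype ι] [DecidableEq ι] [CommRing R]

theorem coe_twistWord_zpow (x y : (Matrix ι ι R)ˣ) (m n : ℤ) :
    ((twistWord x y m ^ n : (Matrix ι ι R)ˣ) : Matrix ι ι R)
      = twistWord (x : Matrix ι ι R) (y : Matrix ι ι R) m ^ n := by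
  simp [twistWord, coe_units_zpow, coe_units_inv]

theorem transpose_twistWord_zpow (X Y : Matrix ι ι R) (m n : ℤ) :
    (twistWord X Y m ^ n)ᵀ = twistWord Yᵀ Xᵀ m ^ n := by
  simp [twistWord, transpose_zpow, transpose_nonsing_inv]

theorem semiconjBy_transpose_twistWord_zpow {P X Y : Matrix ι ι R} (hX : IsUnit X.det)
    (hY : IsUnit Y.det) (hPX : SemiconjBy P Xᵀ X) (hPY : SemiconjBy P Yᵀ Y) (m n : ℤ) :
    SemiconjBy P (twistWord X Y m ^ n)ᵀ (twistWord Y X m ^ n) := by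
  obtain ⟨x', hx'⟩ : IsUnit Xᵀ := by rwa [isUnit_iff_isUnit_det, det_transpose]
  obtain ⟨y', hy'⟩ : IsUnit Yᵀ := by rwa [isUnit_iff_isUnit_det, det_transpose]
  obtain ⟨x, rfl⟩ := (isUnit_iff_isUnit_det X).mpr hX
  obtain ⟨y, rfl⟩ := (isUnit_iff_isUnit_det Y).mpr hY
  rw [transpose_twistWord_zpow, ← hx', ← hy', ← coe_twistWord_zpow, ← coe_twistWord_zpow]
  exact semiconjBy_twistWord_zpow (hy' ▸ hPY) (hx' ▸ hPX) m n

theorem semiconjBy_diag_transpose (A : Matrix (Fin 2) (Fin 2) R) :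
    SemiconjBy !![A 0 1, 0; 0, A 1 0] Aᵀ A := by
  ext i j
  fin_cases i <;> fin_cases j <;> simp [mul_apply, mul_comm]

end Reversal

section Representation

variable {K : Type*} [Field K] {a s : K}

theorem sub_inv_ne_zero (ha : a ≠ 0) (ha1 : a ^ 2 ≠ 1) : a - a⁻¹ ≠ 0 := by
  rwa [ne_eq, sub_eq_zero, ← mul_eq_one_iff_eq_inv₀ ha, ← sq]

theorem det_repX (ha : a ≠ 0) : (repX a).det = 1 := by
  simp [repX, ha]

theorem sub_inv_mul_repY_zero_one (hτ : a - a⁻¹ ≠ 0) :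
    (a - a⁻¹) * repY a s 0 1 = s / (a - a⁻¹) - (a - a⁻¹) := by
  rw [show repY a s 0 1 = s / (a - a⁻¹) ^ 2 - 1 from rfl]
  generalize a - a⁻¹ = τ at hτ
  field_simp

theorem det_repY (ha : a ≠ 0) (ha1 : a ^ 2 ≠ 1) : (repY a s).det = 1 := by
  have hτ := sub_ne_zero.mpr ha1
  rw [repY, det_fin_two_of]
  field_simp
  ring

theorem repX_mul_repY_inv (ha : a ≠ 0) (ha1 : a ^ 2 ≠ 1) :
    repX a * (repY a s)⁻¹ = !![a * repY a s 1 1, -(a * repY a s 0 1);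
      a⁻¹ * s, a⁻¹ * repY a s 0 0] := by
  rw [inv_def, det_repY ha ha1, Ring.inverse_one, one_smul, adjugate_fin_two,
    show repY a s 1 0 = -s from rfl]
  simp [repX]

theorem repX_inv_mul_repY (ha : a ≠ 0) :
    (repX a)⁻¹ * repY a s = !![a⁻¹ * repY a s 0 0, a⁻¹ * repY a s 0 1;
      -(a * s), a * repY a s 1 1] := by
  rw [inv_def, det_repX ha, Ring.inverse_one, one_smul, adjugate_fin_two]
  simp [repX, repY]

theorem sq_sub_one_mul_repY_one_one (ha : a ≠ 0) (ha1 : a ^ 2 ≠ 1) :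
    (a ^ 2 - 1) * (a * repY a s 1 1) = a ^ 2 - 1 + a ^ 2 * s := by
  have hτ := sub_ne_zero.mpr ha1
  rw [show repY a s 1 1 = a⁻¹ + s / (a - a⁻¹) from rfl]
  field_simp

theorem sq_sub_one_mul_repY_zero_zero (ha : a ≠ 0) (ha1 : a ^ 2 ≠ 1) :
    (a ^ 2 - 1) * (a⁻¹ * repY a s 0 0) = a ^ 2 - 1 - s := by
  have hτ := sub_ne_zero.mpr ha1
  rw [show repY a s 0 0 = a - s / (a - a⁻¹) from rfl]
  field_simp

theorem trace_repX_mul_repY_inv (ha : a ≠ 0) (ha1 : a ^ 2 ≠ 1) :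
    (repX a * (repY a s)⁻¹).trace = s + 2 := by
  rw [repX_mul_repY_inv ha ha1, trace_fin_two_of]
  refine mul_left_cancel₀ (sub_ne_zero.mpr ha1) ?_
  linear_combination sq_sub_one_mul_repY_one_one (s := s) ha ha1
    + sq_sub_one_mul_repY_zero_zero (s := s) ha ha1

theorem twistWord_rep_apply_zero_one (ha : a ≠ 0) (ha1 : a ^ 2 ≠ 1) (m : ℤ) :
    a * twistWord (repX a) (repY a s) m 0 1
      = -((S K (m - 1)).eval (s + 2) * repY a s 0 1)
        * (-(chebyshevV K (m - 1)).eval (s + 2) + a ^ 2 * (chebyshevV K m).eval (s + 2)) := by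
  rw [twistWord_apply_of_ne (det_repX ha) (det_repY ha ha1) m zero_ne_one,
    trace_repX_mul_repY_inv ha ha1, repX_mul_repY_inv ha ha1, repX_inv_mul_repY ha, chebyshevV,
    chebyshevV, S_eq K m, show m - 1 - 1 = m - 2 by ring]
  simp only [mul_apply, Fin.sum_univ_two, Matrix.add_apply, of_apply, cons_val', cons_val_zero,
    cons_val_one, cons_val_fin_one, eval_sub, eval_mul, eval_X]
  generalize (S K (m - 1)).eval (s + 2) = g, (S K (m - 2)).eval (s + 2) = g',
    repY a s 0 1 = q
  linear_combination -(g ^ 2 * q) * sq_sub_one_mul_repY_one_one (s := s) ha ha1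
    + (g ^ 2 * q * (a * repY a s 1 1) - g * g' * q) * mul_inv_cancel₀ ha

theorem twistWord_rep_apply_one_zero (ha : a ≠ 0) (ha1 : a ^ 2 ≠ 1) (m : ℤ) :
    a * twistWord (repX a) (repY a s) m 1 0
      = -((S K (m - 1)).eval (s + 2) * s)
        * (-(chebyshevV K m).eval (s + 2) + a ^ 2 * (chebyshevV K (m - 1)).eval (s + 2)) := by
  rw [twistWord_apply_of_ne (det_repX ha) (det_repY ha ha1) m one_ne_zero,
    trace_repX_mul_repY_inv ha ha1, repX_mul_repY_inv ha ha1, repX_inv_mul_repY ha, chebyshevV,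
    chebyshevV, S_eq K m, show m - 1 - 1 = m - 2 by ring]
  simp only [mul_apply, Fin.sum_univ_two, Matrix.add_apply, of_apply, cons_val', cons_val_zero,
    cons_val_one, cons_val_fin_one, eval_sub, eval_mul, eval_X]
  generalize (S K (m - 1)).eval (s + 2) = g, (S K (m - 2)).eval (s + 2) = g'
  linear_combination -(g ^ 2 * s) * sq_sub_one_mul_repY_zero_zero (s := s) ha ha1
    + (g ^ 2 * s * (a⁻¹ * repY a s 0 0) - g * g' * s) * mul_inv_cancel₀ ha

theorem semiconjBy_transpose_repX (a p q : K) : SemiconjBy !![p, 0; 0, q] (repX a)ᵀ (repX a) := by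
  ext i j
  fin_cases i <;> fin_cases j <;> simp [mul_apply, repX, mul_comm]

section Intertwiner

variable {W V : Matrix (Fin 2) (Fin 2) K}

theorem intertwiner_apply_zero_zero (hτ : a - a⁻¹ ≠ 0) (hW : W * repX a = repY a s * W) :
    s * W 0 0 = (a - a⁻¹) * repY a s 0 1 * W 1 0 := by
  have h : W 1 0 * a = -(s * W 0 0) + (a⁻¹ + s / (a - a⁻¹)) * W 1 0 := by
    simpa [mul_apply, repX, repY] using congr_fun₂ hW 1 0
  linear_combination h - W 1 0 * sub_inv_mul_repY_zero_one (s := s) hτ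

theorem intertwiner_apply_one_one (hτ : a - a⁻¹ ≠ 0) (hs : s ≠ 0)
    (hW : W * repX a = repY a s * W) : W 1 1 = (a - a⁻¹) * W 0 1 := by
  have h : W 1 1 * a⁻¹ = -(s * W 0 1) + (a⁻¹ + s / (a - a⁻¹)) * W 1 1 := by
    simpa [mul_apply, repX, repY] using congr_fun₂ hW 1 1
  refine mul_left_cancel₀ hs ?_
  linear_combination -(a - a⁻¹) * h - W 1 1 * div_mul_cancel₀ s hτ

theorem intertwiner_apply_zero_one_ne_zero (hτ : a - a⁻¹ ≠ 0) (hs : s ≠ 0)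
    (hW : W * repX a = repY a s * W) (hdet : W.det = 1) : W 0 1 ≠ 0 := by
  intro h
  rw [det_fin_two, intertwiner_apply_one_one hτ hs hW, h] at hdet
  simp at hdet

theorem longitude_mul_intertwiner (hτ : a - a⁻¹ ≠ 0) (hs : s ≠ 0) (hq : repY a s 0 1 ≠ 0)
    (hW : W * repX a = repY a s * W) (hdet : W.det = 1)
    (hV : SemiconjBy !![repY a s 0 1, 0; 0, repY a s 1 0] Wᵀ V) :
    s * W 0 1 * (V * W) 0 0 = repY a s 0 1 * W 1 0 := by
  have hV00 : V 0 0 = W 0 0 := by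
    have h : repY a s 0 1 * W 0 0 = V 0 0 * repY a s 0 1 := by
      simpa [mul_apply] using congr_fun₂ hV 0 0
    exact mul_left_cancel₀ hq (by linear_combination -h)
  have hV01 : repY a s 0 1 * W 1 0 = -(s * V 0 1) := by
    simpa [mul_apply, show repY a s 1 0 = -s from rfl, mul_comm] using congr_fun₂ hV 0 1
  have h00 := intertwiner_apply_zero_zero hτ hW
  have h11 := intertwiner_apply_one_one hτ hs hW
  rw [det_fin_two] at hdet
  rw [mul_apply, Fin.sum_univ_two, hV00]
  linear_combination W 0 1 * W 1 0 * hV01 + W 0 0 * W 0 1 * h00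
    - repY a s 0 1 * W 1 0 * W 0 0 * h11 + repY a s 0 1 * W 1 0 * hdet

end Intertwiner

theorem twistWord_rep_apply_zero_one_ne_zero (ha : a ≠ 0) (ha1 : a ^ 2 ≠ 1) (hs : s ≠ 0)
    {m n : ℤ} (hrel : twistWord (repX a) (repY a s) m ^ n * repX a
      = repY a s * twistWord (repX a) (repY a s) m ^ n) :
    twistWord (repX a) (repY a s) m 0 1 ≠ 0 := by
  have hdet : (twistWord (repX a) (repY a s) m).det = 1 :=
    det_twistWord (det_repX ha) (det_repY ha ha1) m
  have hW01 := intertwiner_apply_zero_one_ne_zero (sub_inv_ne_zero ha ha1) hs hrel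
    (det_zpow_eq_one_s16 hdet n)
  rw [zpow_apply_of_ne hdet n zero_ne_one] at hW01
  exact right_ne_zero_of_mul hW01

theorem longitude_mul_twistWord (ha : a ≠ 0) (ha1 : a ^ 2 ≠ 1) (hs : s ≠ 0)
    (hq : repY a s 0 1 ≠ 0) {m n : ℤ}
    (hrel : twistWord (repX a) (repY a s) m ^ n * repX a
      = repY a s * twistWord (repX a) (repY a s) m ^ n) :
    s * twistWord (repX a) (repY a s) m 0 1
        * (twistWord (repY a s) (repX a) m ^ n * twistWord (repX a) (repY a s) m ^ n) 0 0
      = repY a s 0 1 * twistWord (repX a) (repY a s) m 1 0 := by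
  have hτ := sub_inv_ne_zero ha ha1
  have hdetX := det_repX ha
  have hdetY : (repY a s).det = 1 := det_repY ha ha1
  have hdetU := det_twistWord hdetX hdetY m
  have hdetW := det_zpow_eq_one_s16 hdetU n
  have hV := semiconjBy_transpose_twistWord_zpow (hdetX ▸ isUnit_one) (hdetY ▸ isUnit_one)
    (semiconjBy_transpose_repX a _ _) (semiconjBy_diag_transpose (repY a s)) m n
  have hlong := longitude_mul_intertwiner hτ hs hq hrel hdetW hV
  have hW01 := zpow_apply_of_ne hdetU n zero_ne_one
  have hW10 := zpow_apply_of_ne hdetU n one_ne_zero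
  have hσ : (S K (n - 1)).eval (twistWord (repX a) (repY a s) m).trace ≠ 0 :=
    left_ne_zero_of_mul (hW01 ▸ intertwiner_apply_zero_one_ne_zero hτ hs hrel hdetW)
  rw [hW01, hW10] at hlong
  exact mul_left_cancel₀ hσ (by linear_combination hlong)

theorem longitude_apply_zero_zero (ha : a ≠ 0) (ha1 : a ^ 2 ≠ 1) (hs : s ≠ 0) (m n : ℤ)
    (hrel : twistWord (repX a) (repY a s) m ^ n * repX a
      = repY a s * twistWord (repX a) (repY a s) m ^ n) :
    (twistWord (repY a s) (repX a) m ^ n * twistWord (repX a) (repY a s) m ^ n) 0 0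
        = (-(chebyshevV K m).eval (s + 2) + a ^ 2 * (chebyshevV K (m - 1)).eval (s + 2))
          / (-(chebyshevV K (m - 1)).eval (s + 2) + a ^ 2 * (chebyshevV K m).eval (s + 2)) ∧
      -(chebyshevV K (m - 1)).eval (s + 2) + a ^ 2 * (chebyshevV K m).eval (s + 2) ≠ 0 := by
  have hU01 := twistWord_rep_apply_zero_one (s := s) ha ha1 m
  have hU10 := twistWord_rep_apply_one_zero (s := s) ha ha1 m
  have hU01_ne := twistWord_rep_apply_zero_one_ne_zero ha ha1 hs hrel
  obtain ⟨hgq, hden⟩ := mul_ne_zero_iff.mp (hU01 ▸ mul_ne_zero ha hU01_ne)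
  obtain ⟨hg, hq⟩ := mul_ne_zero_iff.mp (neg_ne_zero.mp hgq)
  have hlong := longitude_mul_twistWord ha ha1 hs hq hrel
  refine ⟨(eq_div_iff hden).mpr (mul_left_cancel₀ (mul_ne_zero hs (mul_ne_zero hg hq)) ?_), hden⟩
  generalize (twistWord (repY a s) (repX a) m ^ n * twistWord (repX a) (repY a s) m ^ n) 0 0 = M
    at hlong ⊢
  linear_combination -a * hlong + s * M * hU01 - repY a s 0 1 * hU10

end Representation

theorem Xmat'_eq_repX (t : ℝ) : Xmat' t = repX √t := by
  rw [Xmat', repX, one_div]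

theorem Ymat'_eq_repY (s : ℝ) {t : ℝ} (ht0 : 0 < t) (ht1 : t ≠ 1) : Ymat' s t = repY √t s := by
  have hsq : √t ^ 2 = t := Real.sq_sqrt ht0.le
  have hroot : √t ≠ 0 := (Real.sqrt_pos.mpr ht0).ne'
  have hτ : √t - (√t)⁻¹ ≠ 0 := sub_inv_ne_zero hroot (hsq.trans_ne ht1)
  have h00 : (t - s - 1) / (√t - (√t)⁻¹) = √t - s / (√t - (√t)⁻¹) := by
    rw [eq_sub_iff_add_eq, ← add_div, div_eq_iff hτ, mul_sub, mul_inv_cancel₀ hroot, ← sq, hsq]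
    ring
  have h11 : (s + 1 - t⁻¹) / (√t - (√t)⁻¹) = (√t)⁻¹ + s / (√t - (√t)⁻¹) := by
    rw [← sub_eq_iff_eq_add, ← sub_div, div_eq_iff hτ, mul_sub, inv_mul_cancel₀ hroot,
      ← sq, inv_pow, hsq]
    ring
  simp only [Ymat', repY, one_div, h00, h11]

theorem longitude_entry_general (m n : ℤ) {s t : ℝ} (hs : s ≠ 0) (ht0 : 0 < t) (ht1 : t ≠ 1)
    (hrel : ((Xmat' t * (Ymat' s t)⁻¹) ^ m * ((Xmat' t)⁻¹ * Ymat' s t) ^ m) ^ n * Xmat' t =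
      Ymat' s t * ((Xmat' t * (Ymat' s t)⁻¹) ^ m * ((Xmat' t)⁻¹ * Ymat' s t) ^ m) ^ n) :
    (((Ymat' s t * (Xmat' t)⁻¹) ^ m * ((Ymat' s t)⁻¹ * Xmat' t) ^ m) ^ n *
        ((Xmat' t * (Ymat' s t)⁻¹) ^ m * ((Xmat' t)⁻¹ * Ymat' s t) ^ m) ^ n) 0 0 =
      (-fZ m s + t * fZ (m - 1) s) / (-fZ (m - 1) s + t * fZ m s) ∧
    -fZ (m - 1) s + t * fZ m s ≠ 0 := by
  have hroot : √t ≠ 0 := (Real.sqrt_pos.mpr ht0).ne'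
  have hsq : √t ^ 2 = t := Real.sq_sqrt ht0.le
  rw [Xmat'_eq_repX, Ymat'_eq_repY s ht0 ht1] at *
  simpa only [twistWord, hsq, fZ_eq_eval_chebyshevV] using
    longitude_apply_zero_zero hroot (hsq.trans_ne ht1) hs m n hrel

/-- If the assignment `x ↦ X'`, `y ↦ Y'` satisfies the knot-group relation
`U^n X' = Y' U^n`, then the `(1,1)`-entry of the image `M = U_*^n U^n` of the longitude
equals `(-f_m + t f_{m-1})/(-f_{m-1} + t f_m)`, the denominator being nonzero. -/
theorem longitude_entry (m : ℤ) (hm : m ≠ 0) (n : ℤ) (s t : ℝ) (hs : 0 < s) (ht : 1 < t)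
    (h1 : s + 2 < t + 1 / t) (h2 : t + 1 / t < s + 2 + 4 / (s * gZ (m - 1) s ^ 2))
    (hrel : ((Xmat' t * (Ymat' s t)⁻¹) ^ m * ((Xmat' t)⁻¹ * Ymat' s t) ^ m) ^ n * Xmat' t =
      Ymat' s t * ((Xmat' t * (Ymat' s t)⁻¹) ^ m * ((Xmat' t)⁻¹ * Ymat' s t) ^ m) ^ n) :
    (((Ymat' s t * (Xmat' t)⁻¹) ^ m * ((Ymat' s t)⁻¹ * Xmat' t) ^ m) ^ n *
        ((Xmat' t * (Ymat' s t)⁻¹) ^ m * ((Xmat' t)⁻¹ * Ymat' s t) ^ m) ^ n) 0 0 =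
      (-fZ m s + t * fZ (m - 1) s) / (-fZ (m - 1) s + t * fZ m s) ∧
    -fZ (m - 1) s + t * fZ m s ≠ 0 :=
  longitude_entry_general m n hs.ne' (one_pos.trans ht) ht.ne' hrel
end

section
/- Let m be a nonzero integer and let t : ℝ → ℝ be any function such that for every s > 0 one has t(s) > 1 and s + 2 < t(s) + 1/t(s) < s + 2 + 4/(s·g_{m-1}(s)²). Then for every integer k with 1 ≤ k ≤ |m|, the function F_k(s) = t(s)^{k-1}·(-f_k(s) + t(s)·f_{k-1}(s)) tends to 1 as s → ∞. -/
open Filter Topology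

/-!
If `t(s)` were exactly the large root of `x + 1/x = s + 2`, the recursion would make `F_k`
independent of `k`; in general `F_{k+1} - F_k = (t + 1/t - (s + 2)) t^k f_k`. Since `t(s) ∼ s`, the
product `t^k f_k` is `O(s^(k + |k|))`, which the bound on the defect `t + 1/t - (s + 2)` beats as
long as `k < |m|`. Hence all `F_k` with `k ≤ |m|` have the same limit as `F_0 = 1 - 1/t`.
-/

open Asymptotics

theorem zpow_isBigO_zpow_atTop {a b : ℤ} (h : a ≤ b) :
    (fun s : ℝ => s ^ a) =O[atTop] fun s => s ^ b := by
  refine IsBigO.of_norm_eventuallyLE ?_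
  filter_upwards [eventually_ge_atTop 1] with s hs
  rw [Real.norm_of_nonneg (by positivity)]
  exact zpow_le_zpow_right₀ hs h

theorem isLittleO_inv_of_abs_le_div {u v : ℝ → ℝ} {c : ℝ}
    (h : ∀ᶠ s in atTop, |u s| ≤ c / (s * v s)) : u =o[atTop] fun s => (v s)⁻¹ := by
  have h_coeff : (fun s : ℝ => c / s) =o[atTop] fun _ => (1 : ℝ) :=
    (isLittleO_one_iff ℝ).2 (tendsto_const_nhds.div_atTop tendsto_id)
  have h_prod : (fun s => c / s * (v s)⁻¹) =o[atTop] fun s => (v s)⁻¹ := by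
    simpa only [one_mul] using h_coeff.mul_isBigO (isBigO_refl (fun s => (v s)⁻¹) atTop)
  refine (IsBigO.of_norm_eventuallyLE (h.mono fun s hs => ?_)).trans_isLittleO h_prod
  rwa [← div_eq_mul_inv, div_div]

theorem isEquivalent_pow_of_recurrence {u : ℕ → ℝ → ℝ} {c : ℝ}
    (h_zero : u 0 ~[atTop] fun _ => 1) (h_one : u 1 ~[atTop] fun s => s)
    (h_rec : ∀ n s, u (n + 2) s = (s + c) * u (n + 1) s - u n s) (n : ℕ) :
    u n ~[atTop] fun s => s ^ n := by
  induction n using Nat.twoStepInduction with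
  | zero => simpa only [pow_zero] using h_zero
  | one => simpa only [pow_one] using h_one
  | more n ih ih_succ =>
    have h_shift : (fun s => s + c) ~[atTop] fun s => s :=
      IsEquivalent.refl.add_isLittleO (isLittleO_const_id_atTop c)
    have h_leading : (fun s => (s + c) * u (n + 1) s) ~[atTop] fun s => s ^ (n + 2) :=
      (h_shift.mul ih_succ).congr_right (.of_forall fun s => (pow_succ' s (n + 1)).symm)
    have h_lower : u n =o[atTop] fun s => s ^ (n + 2) :=
      ih.isBigO.trans_isLittleO (isLittleO_pow_pow_atTop_of_lt (by lia))
    exact (h_leading.sub_isLittleO h_lower).congr_left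
      (.of_forall fun s => (h_rec n s).symm)

theorem fN_isEquivalent_pow (n : ℕ) : fN n ~[atTop] fun s => s ^ n :=
  isEquivalent_pow_of_recurrence .refl
    (IsEquivalent.refl.add_isLittleO (isLittleO_const_id_atTop 1)) (fun _ _ => rfl) n

theorem gN_isEquivalent_pow (n : ℕ) : gN n ~[atTop] fun s => s ^ n :=
  isEquivalent_pow_of_recurrence .refl
    (IsEquivalent.refl.add_isLittleO (isLittleO_const_id_atTop 2)) (fun _ _ => rfl) n

theorem fZ_add_one (k : ℤ) (s : ℝ) : fZ (k + 1) s = (s + 2) * fZ k s - fZ (k - 1) s := by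
  match k with
  | .ofNat 0 => change s + 1 = (s + 2) * 1 - 1; ring
  | .ofNat (n + 1) =>
    rw [show Int.ofNat (n + 1) - 1 = .ofNat n from add_sub_cancel_right (n : ℤ) 1]; rfl
  | .negSucc 0 => change 1 = (s + 2) * 1 - (s + 1); ring
  | .negSucc (n + 1) =>
    change fN n s = (s + 2) * fN (n + 1) s - fN (n + 2) s
    rw [fN]
    ring

theorem fZ_isBigO_zpow_abs (k : ℤ) : fZ k =O[atTop] fun s => s ^ |k| := by
  have h_fN (n : ℕ) (hn : n ≤ |k|) : fN n =O[atTop] fun s => s ^ |k| :=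
    (fN_isEquivalent_pow n).isBigO.trans <| by
      simpa only [zpow_natCast] using zpow_isBigO_zpow_atTop hn
  cases k with
  | ofNat n => exact h_fN n (le_abs_self _)
  | negSucc n => exact h_fN n (by grind)

theorem gZ_sub_one_sq_isEquivalent_zpow {m : ℤ} (hm : m ≠ 0) :
    (fun s => gZ (m - 1) s ^ 2) ~[atTop] fun s => s ^ (2 * (|m| - 1)) := by
  obtain ⟨n, hn⟩ : ∃ n : ℕ, |m| = n + 1 := ⟨(|m| - 1).toNat, by grind⟩
  have h_sq (s : ℝ) : gZ (m - 1) s ^ 2 = gN n s ^ 2 := by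
    obtain h | h : m - 1 = .ofNat n ∨ m - 1 = .negSucc (n + 1) := by grind
    · rw [h]; rfl
    · rw [h]; exact neg_sq _
  have h_pow (s : ℝ) : s ^ (2 * (|m| - 1)) = (s ^ n) ^ 2 := by
    rw [hn, add_sub_cancel_right, mul_comm, zpow_mul]; norm_cast
  simp only [h_sq, h_pow]
  exact (gN_isEquivalent_pow n).pow 2

/-- The function `F_k` of the theorem, with the dependence on `t` made explicit. -/
noncomputable def FZ (t : ℝ → ℝ) (k : ℤ) (s : ℝ) : ℝ :=
  t s ^ (k - 1) * (-fZ k s + t s * fZ (k - 1) s)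

/-- The error with which `t(s)` solves the equation `x + 1/x = s + 2`. -/
noncomputable def rootDefect (t : ℝ → ℝ) (s : ℝ) : ℝ :=
  t s + 1 / t s - (s + 2)

section Root

variable {t : ℝ → ℝ}

theorem FZ_add_one {s : ℝ} (ht : t s ≠ 0) (k : ℤ) :
    FZ t (k + 1) s = FZ t k s + rootDefect t s * (t s ^ k * fZ k s) := by
  simp only [FZ, rootDefect, add_sub_cancel_right, fZ_add_one, zpow_sub_one₀ ht]
  field_simp
  ring

theorem tendsto_FZ_zero (ht : Tendsto t atTop atTop) : Tendsto (FZ t 0) atTop (𝓝 1) := by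
  have h_inv : Tendsto (fun s => 1 - (t s)⁻¹) atTop (𝓝 1) := by
    simpa only [sub_zero, Pi.inv_apply] using ht.inv_tendsto_atTop.const_sub 1
  refine h_inv.congr' ?_
  filter_upwards [ht.eventually_ne_atTop 0] with s hs
  change 1 - (t s)⁻¹ = t s ^ (-1 : ℤ) * (-1 + t s * 1)
  rw [zpow_neg_one]
  field_simp
  ring

theorem zpow_mul_fZ_isBigO (ht : t ~[atTop] fun s => s) (k : ℤ) :
    (fun s => t s ^ k * fZ k s) =O[atTop] fun s => s ^ (k + |k|) := by
  refine ((ht.zpow k).isBigO.mul (fZ_isBigO_zpow_abs k)).congr' .rfl ?_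
  filter_upwards [eventually_ne_atTop 0] with s hs
  exact (zpow_add₀ hs k |k|).symm

theorem tendsto_rootDefect_mul_zpow_mul_fZ {N k : ℤ} (ht : t ~[atTop] fun s => s)
    (h_defect : rootDefect t =o[atTop] fun s => (s ^ (2 * N))⁻¹) (hN : 0 ≤ N) (hk : k ≤ N) :
    Tendsto (fun s => rootDefect t s * (t s ^ k * fZ k s)) atTop (𝓝 0) := by
  have h_prod : (fun s => t s ^ k * fZ k s) =O[atTop] fun s => s ^ (2 * N) :=
    (zpow_mul_fZ_isBigO ht k).trans (zpow_isBigO_zpow_atTop (by grind))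
  refine (isLittleO_one_iff ℝ).1 ((h_defect.mul_isBigO h_prod).congr' .rfl ?_)
  filter_upwards [eventually_ne_atTop 0] with s hs
  exact inv_mul_cancel₀ (zpow_ne_zero _ hs)

theorem tendsto_FZ {N k : ℤ} (ht : t ~[atTop] fun s => s)
    (h_defect : rootDefect t =o[atTop] fun s => (s ^ (2 * N))⁻¹) (hN : 0 ≤ N) (hk : k ≤ N + 1) :
    Tendsto (FZ t k) atTop (𝓝 1) := by
  have ht_top : Tendsto t atTop atTop := ht.symm.tendsto_atTop tendsto_id
  have h_step (j : ℤ) : ∀ᶠ s in atTop,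
      FZ t (j + 1) s = FZ t j s + rootDefect t s * (t s ^ j * fZ j s) :=
    (ht_top.eventually_ne_atTop 0).mono fun s hs => FZ_add_one hs j
  have h_error {j : ℤ} (hj : j ≤ N) :
      Tendsto (fun s => rootDefect t s * (t s ^ j * fZ j s)) atTop (𝓝 0) :=
    tendsto_rootDefect_mul_zpow_mul_fZ ht h_defect hN hj
  induction k using Int.induction_on with
  | zero => exact tendsto_FZ_zero ht_top
  | succ j ih =>
    rw [← add_zero (1 : ℝ)]
    exact ((ih (by lia)).add (h_error (by lia))).congr' (EventuallyEq.symm (h_step j))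
  | pred j ih =>
    rw [← sub_zero (1 : ℝ)]
    refine ((ih (by lia)).sub (h_error (j := -j - 1) (by lia))).congr' ?_
    filter_upwards [h_step (-j - 1)] with s hs
    rw [sub_add_cancel] at hs
    rw [hs, add_sub_cancel_right]

theorem isEquivalent_id_of_rootDefect_isBigO_one (ht : ∀ᶠ s in atTop, 1 ≤ t s)
    (h_defect : rootDefect t =O[atTop] fun _ => (1 : ℝ)) : t ~[atTop] fun s => s := by
  have h_inv : (fun s => 1 / t s) =O[atTop] fun _ => (1 : ℝ) := by
    refine IsBigO.of_norm_eventuallyLE (ht.mono fun s hs => ?_)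
    change ‖1 / t s‖ ≤ 1
    rw [Real.norm_of_nonneg (by positivity)]
    exact div_le_one_of_le₀ hs (by positivity)
  have h_diff : (fun s => t s - s) =O[atTop] fun _ => (1 : ℝ) :=
    ((h_defect.add (isBigO_const_const 2 one_ne_zero _)).sub h_inv).congr_left
      fun s => by simp only [rootDefect]; ring
  exact h_diff.trans_isLittleO (isLittleO_const_id_atTop 1)

theorem F_limit_general {m : ℤ} (hm : m ≠ 0) (ht : ∀ᶠ s in atTop, 1 ≤ t s)
    (h_defect : rootDefect t =o[atTop] fun s => (gZ (m - 1) s ^ 2)⁻¹) {k : ℤ} (hk : k ≤ |m|) :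
    Tendsto (FZ t k) atTop (𝓝 1) := by
  have hN : 0 ≤ |m| - 1 := by grind
  have h_defect_zpow : rootDefect t =o[atTop] fun s => (s ^ (2 * (|m| - 1)))⁻¹ :=
    h_defect.trans_isBigO (gZ_sub_one_sq_isEquivalent_zpow hm).inv.isBigO
  have h_defect_one : rootDefect t =O[atTop] fun _ => (1 : ℝ) := by
    refine h_defect_zpow.isBigO.trans ?_
    simpa only [← zpow_neg, zpow_zero] using
      zpow_isBigO_zpow_atTop (a := -(2 * (|m| - 1))) (b := 0) (by lia)
  exact tendsto_FZ (isEquivalent_id_of_rootDefect_isBigO_one ht h_defect_one) h_defect_zpow hN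
    (by lia)

end Root

/-- If `t(s) > 1` and `s + 2 < t(s) + 1/t(s) < s + 2 + 4/(s g_{m-1}(s)²)` for all `s > 0`,
then for every integer `k` with `1 ≤ k ≤ |m|`,
`F_k(s) = t(s)^{k-1}(-f_k(s) + t(s) f_{k-1}(s)) → 1` as `s → ∞`. -/
theorem F_limit (m : ℤ) (hm : m ≠ 0) (t : ℝ → ℝ)
    (ht : ∀ s : ℝ, 0 < s → 1 < t s ∧ s + 2 < t s + 1 / t s ∧
      t s + 1 / t s < s + 2 + 4 / (s * gZ (m - 1) s ^ 2)) :
    ∀ k : ℤ, 1 ≤ k → k ≤ |m| →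
      Tendsto (fun s => t s ^ (k - 1) * (-fZ k s + t s * fZ (k - 1) s)) atTop (𝓝 1) :=
  fun _ _ hk => F_limit_general hm ((eventually_gt_atTop 0).mono fun s hs => (ht s hs).1.le)
    (isLittleO_inv_of_abs_le_div <| (eventually_gt_atTop 0).mono fun s hs =>
      (abs_of_pos (sub_pos.2 (ht s hs).2.1)).trans_le (sub_lt_iff_lt_add'.2 (ht s hs).2.2).le) hk
end
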